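/- arXiv:math/0107020 — 5 statements merged into one kernel-verified Lean document; each statement's English description precedes it below -/
import Mathlib

section
/- Let μ ∈ Λ* and let r, s be positive words. If v·r = v'·s (concatenation of words) where v ∈ L_μ^k and v' ∈ L_μ^l for some k, l ≥ 1, then v = v'. -/
/-- `Lset Λ μ k` is the set `L_μ^k` of words `ν = ν₁…ν_k ∈ Λ` of length `k`
such that `μν₁…ν_{k-1} ∈ Λ` but `μν ∉ Λ`. -/
def Lset {n : ℕ} (Λ : Set (List (Fin n))) (μ : List (Fin n)) (k : ℕ) :
    Set (List (Fin n)) :=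
  {ν | ν.length = k ∧ ν ∈ Λ ∧ μ ++ ν.dropLast ∈ Λ ∧ μ ++ ν ∉ Λ}

/-!
The words of `⋃ k, L_μ^k` are minimal, for the prefix order, among those whose concatenation with
`μ` leaves `Λ`; hence none is a proper prefix of another. Two prefixes of one word are always
comparable, so at most one word of `⋃ k, L_μ^k` can be a prefix of a given word.
-/

open Descriptive Descriptive.Tree

variable {α : Type*}

theorem eq_or_prefix_dropLast_of_prefix {v w : List α} (h : v <+: w) :
    v = w ∨ v <+: w.dropLast := by
  rcases w.eq_nil_or_concat' with rfl | ⟨u, a, rfl⟩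
  · exact .inl (List.prefix_nil.mp h)
  · simpa only [List.dropLast_concat] using List.prefix_concat_iff.mp h

theorem eq_of_append_eq_append_of_isAntichain {S : Set (List α)}
    (hS : IsAntichain (· <+: ·) S) {v v' r s : List α} (hv : v ∈ S) (hv' : v' ∈ S)
    (h : v ++ r = v' ++ s) : v = v' := by
  have hv'_prefix : v' <+: v ++ r := h ▸ List.prefix_append v' s
  rcases List.prefix_or_prefix_of_prefix (List.prefix_append v r) hv'_prefix with hle | hle
  · exact hS.eq hv hv' hle
  · exact (hS.eq hv' hv hle).symm

/-- The words at which one first leaves the tree `T`: those outside `T` whose proper prefixes all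
lie in `T`. As `T` is prefix-closed, only the longest proper prefix `ν.dropLast` is tested; since
`[].dropLast = []`, the empty word is never an exit word. -/
def exitWords (T : tree α) : Set (List α) :=
  {ν | ν.dropLast ∈ T ∧ ν ∉ T}

theorem isAntichain_exitWords (T : tree α) : IsAntichain (· <+: ·) (exitWords T) := by
  intro v hv w hw hne hvw
  have hv_dropLast : v <+: w.dropLast := (eq_or_prefix_dropLast_of_prefix hvw).resolve_left hne
  exact hv.2 (mem_of_prefix hv_dropLast hw.1)

theorem Lset_subset_exitWords {n : ℕ} (T : tree (Fin n)) (μ : List (Fin n)) (k : ℕ) :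
    Lset (T : Set (List (Fin n))) μ k ⊆ exitWords (subAt T μ) :=
  fun _ hν ↦ hν.2.2

theorem stmt_0_general (T : tree α) (μ : List α) {v v' r s : List α}
    (hv : v ∈ exitWords (subAt T μ)) (hv' : v' ∈ exitWords (subAt T μ))
    (h : v ++ r = v' ++ s) : v = v' :=
  eq_of_append_eq_append_of_isAntichain (isAntichain_exitWords (subAt T μ)) hv hv' h

theorem stmt_0 (n : ℕ) (hn : 1 ≤ n) (Λ : Set (List (Fin n)))
    (hΛe : ([] : List (Fin n)) ∈ Λ)
    (hΛg : ∀ i : Fin n, [i] ∈ Λ)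
    (hΛsub : ∀ ν ∈ Λ, ∀ w : List (Fin n), w <:+: ν → w ∈ Λ)
    (μ : List (Fin n)) (hμ : μ ∈ Λ)
    (k l : ℕ) (hk : 1 ≤ k) (hl : 1 ≤ l)
    (v v' r s : List (Fin n))
    (hv : v ∈ Lset Λ μ k) (hv' : v' ∈ Lset Λ μ l)
    (h : v ++ r = v' ++ s) :
    v = v' := by
  let T : tree (Fin n) := ⟨Λ, fun x a hx ↦ hΛsub _ hx x (List.prefix_append x [a]).isInfix⟩
  exact stmt_0_general T μ (Lset_subset_exitWords T μ k hv) (Lset_subset_exitWords T μ l hv') h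
end

section
/- For every μ ∈ Λ*, the operator S_μ is a partial isometry: S_μ = S_μ S_μ* S_μ. -/
open ContinuousLinearMap

/-- For a positive word `μ = μ₁…μ_k` over the alphabet `{1,…,n}`,
`Sw S μ = S_{μ₁} ⋯ S_{μ_k}`, with `Sw S [] = 1`. -/
noncomputable def Sw {H : Type*} [NormedAddCommGroup H] [InnerProductSpace ℂ H]
    {n : ℕ} (S : Fin n → H →L[ℂ] H) (μ : List (Fin n)) : H →L[ℂ] H :=
  (μ.map S).prod

/-- An element `a` of a magma with a star operation is a partial isometry if `a a* a = a`. For a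
bounded operator on a Hilbert space, where `star` is the adjoint, this says that `a` is isometric on
the orthogonal complement of its kernel. -/
def IsPartialIsometry {M : Type*} [Mul M] [Star M] (a : M) : Prop :=
  a * star a * a = a

namespace IsPartialIsometry

theorem one {M : Type*} [Monoid M] [StarMul M] : IsPartialIsometry (1 : M) := by
  simp [IsPartialIsometry]

theorem mul_of_commute {M : Type*} [Semigroup M] [StarMul M] {a b : M}
    (ha : IsPartialIsometry a) (hb : IsPartialIsometry b)
    (hab : Commute (b * star b) (star a * a)) : IsPartialIsometry (a * b) :=
  calc a * b * star (a * b) * (a * b)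
      = a * ((b * star b) * (star a * a)) * b := by simp only [star_mul, mul_assoc]
    _ = a * ((star a * a) * (b * star b)) * b := by rw [hab.eq]
    _ = (a * star a * a) * (b * star b * b) := by simp only [mul_assoc]
    _ = a * b := by rw [ha, hb]

end IsPartialIsometry

theorem stmt_2_general {ι M : Type*} [Monoid M] [StarMul M] (s : ι → M) (μ : List ι)
    (hs : ∀ i ∈ μ, IsPartialIsometry (s i))
    (hcomm : ∀ i ν, i :: ν <:+ μ →
      Commute ((ν.map s).prod * star (ν.map s).prod) (star (s i) * s i)) :
    IsPartialIsometry (μ.map s).prod := by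
  induction μ with
  | nil => exact .one
  | cons i ν ih =>
    have hν : IsPartialIsometry (ν.map s).prod :=
      ih (fun j hj ↦ hs j (List.mem_cons_of_mem i hj))
        fun j ρ hρ ↦ hcomm j ρ (hρ.trans (List.suffix_cons i ν))
    rw [List.map_cons, List.prod_cons]
    exact (hs i List.mem_cons_self).mul_of_commute hν (hcomm i ν List.suffix_rfl)

theorem stmt_2 {H : Type*} [NormedAddCommGroup H] [InnerProductSpace ℂ H]
    [CompleteSpace H]
    (n : ℕ) (hn : 1 ≤ n) (S : Fin n → H →L[ℂ] H)
    (hpi : ∀ i, S i * adjoint (S i) * S i = S i)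
    (Λ : Set (List (Fin n)))
    (hΛe : ([] : List (Fin n)) ∈ Λ)
    (hΛg : ∀ i : Fin n, [i] ∈ Λ)
    (hΛsub : ∀ ν ∈ Λ, ∀ w : List (Fin n), w <:+: ν → w ∈ Λ)
    (hM1 : ∑ i, S i * adjoint (S i) = 1)
    (hM2 : ∀ μ ∈ Λ, ∀ ν ∈ Λ,
      Commute (Sw S μ * adjoint (Sw S μ)) (adjoint (Sw S ν) * Sw S ν))
    (μ : List (Fin n)) (hμ : μ ∈ Λ) :
    Sw S μ = Sw S μ * adjoint (Sw S μ) * Sw S μ := by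
  refine (stmt_2_general S μ (fun i _ ↦ hpi i) fun i ν hν ↦ ?_).symm
  simpa [Sw, star_eq_adjoint] using
    hM2 ν (hΛsub μ hμ ν ((List.suffix_cons i ν).trans hν).isInfix) [i] (hΛg i)
end

section
/- If ν is a positive word with ν ∉ Λ*, then S_ν = 0. -/
open ContinuousLinearMap

/-!
A word outside `Λ` has a factor `i :: μ` outside `Λ` all of whose proper factors lie in `Λ`, so
`S_μ S_μ*` is one of the positive summands of `1 - S_i* S_i` in (M3) and is dominated by it.
Conjugating by the partial isometry `S_i` turns this bound into
`(S_i S_μ) (S_i S_μ)* ≤ S_i (1 - S_i* S_i) S_i* = 0`, whence `S_i S_μ = 0`.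
-/

/-- A minimal forbidden word of the language `Λ`: a word outside `Λ` all of whose proper contiguous
factors lie in `Λ`. For a factor-closed `Λ` containing every letter, those beginning with `i` are
the words `i :: μ` with `S_μ S_μ*` a summand in (M3). -/
def IsMinimalForbidden {ι : Type*} (Λ : Set (List ι)) (w : List ι) : Prop :=
  w ∉ Λ ∧ ∀ v, v <:+: w → v ≠ w → v ∈ Λ

theorem exists_infix_isMinimalForbidden {ι : Type*} {Λ : Set (List ι)} {w : List ι} (hw : w ∉ Λ) :
    ∃ u, u <:+: w ∧ IsMinimalForbidden Λ u := by
  obtain ⟨u, ⟨hu_infix, hu⟩, hmin⟩ :=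
    exists_minimalFor_of_wellFoundedLT (fun u ↦ u <:+: w ∧ u ∉ Λ) List.length
      ⟨w, List.infix_rfl, hw⟩
  refine ⟨u, hu_infix, hu, fun v hvu hne ↦ ?_⟩
  by_contra hv
  exact hne (hvu.eq_of_length_le (hmin ⟨hvu.trans hu_infix, hv⟩ hvu.length_le))

theorem IsMinimalForbidden.mem_iUnion_Lset {n : ℕ} {Λ : Set (List (Fin n))} {i : Fin n}
    {μ : List (Fin n)} (hμ : IsMinimalForbidden Λ (i :: μ)) (hi : [i] ∈ Λ) :
    μ ∈ ⋃ k ≥ 1, Lset Λ [i] k := by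
  have hne : μ ≠ [] := by
    rintro rfl
    exact hμ.1 hi
  have htail : μ ∈ Λ := hμ.2 μ (List.suffix_cons i μ).isInfix (List.cons_ne_self i μ).symm
  have hinit : i :: μ.dropLast ∈ Λ := by
    refine hμ.2 _ ((List.prefix_cons_inj i).2 μ.dropLast_prefix).isInfix fun h ↦ ?_
    have hlength := congrArg List.length (List.cons.inj h).2
    have hpos := List.length_pos_iff.2 hne
    rw [List.length_dropLast] at hlength
    omega
  exact Set.mem_iUnion₂.2 ⟨μ.length, List.length_pos_iff.2 hne, rfl, htail, hinit, hμ.1⟩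

theorem prod_map_eq_zero_of_infix {ι M : Type*} [MonoidWithZero M] {f : ι → M} {u w : List ι}
    (huw : u <:+: w) (hu : (u.map f).prod = 0) : (w.map f).prod = 0 := by
  obtain ⟨p, q, rfl⟩ := huw
  simp only [List.map_append, List.prod_append, hu, mul_zero, zero_mul]

theorem mul_eq_zero_of_mul_star_self_le_one_sub {A : Type*} [NormedRing A] [StarRing A]
    [CStarRing A] [PartialOrder A] [StarOrderedRing A] {a b : A} (ha : a * star a * a = a)
    (hab : b * star b ≤ 1 - star a * a) : a * b = 0 := by
  have hle : (a * b) * star (a * b) ≤ 0 :=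
    calc (a * b) * star (a * b) = a * (b * star b) * star a := by
          simp only [star_mul, mul_assoc]
      _ ≤ a * (1 - star a * a) * star a := star_right_conjugate_le_conjugate hab a
      _ = 0 := by rw [mul_sub, mul_one, ← mul_assoc, ha, sub_self, zero_mul]
  exact (CStarRing.mul_star_self_eq_zero_iff _).1 (hle.antisymm (mul_star_self_nonneg _))

theorem stmt_5_general {ι A : Type*} [NormedRing A] [StarRing A] [CStarRing A] [PartialOrder A]
    [StarOrderedRing A] {S : ι → A} (hS : ∀ i, S i * star (S i) * S i = S i)
    {Λ : Set (List ι)} (hΛ : [] ∈ Λ)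
    (hle : ∀ i μ, IsMinimalForbidden Λ (i :: μ) →
      (μ.map S).prod * star (μ.map S).prod ≤ 1 - star (S i) * S i)
    {ν : List ι} (hν : ν ∉ Λ) : (ν.map S).prod = 0 := by
  obtain ⟨u, huν, hu⟩ := exists_infix_isMinimalForbidden hν
  refine prod_map_eq_zero_of_infix huν ?_
  cases u with
  | nil => exact absurd hΛ hu.1
  | cons i μ =>
    rw [List.map_cons, List.prod_cons]
    exact mul_eq_zero_of_mul_star_self_le_one_sub (hS i) (hle i μ hu)

theorem stmt_5 {H : Type*} [NormedAddCommGroup H] [InnerProductSpace ℂ H]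
    [CompleteSpace H]
    (n : ℕ) (hn : 1 ≤ n) (S : Fin n → H →L[ℂ] H)
    (hpi : ∀ i, S i * adjoint (S i) * S i = S i)
    (Λ : Set (List (Fin n)))
    (hΛe : ([] : List (Fin n)) ∈ Λ)
    (hΛg : ∀ i : Fin n, [i] ∈ Λ)
    (hΛsub : ∀ ν ∈ Λ, ∀ w : List (Fin n), w <:+: ν → w ∈ Λ)
    (hM1 : ∑ i, S i * adjoint (S i) = 1)
    (hM2 : ∀ μ ∈ Λ, ∀ ν ∈ Λ,
      Commute (Sw S μ * adjoint (Sw S μ)) (adjoint (Sw S ν) * Sw S ν))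
    (hM3 : ∀ i : Fin n,
      HasSum (fun ν : ↥(⋃ k ≥ 1, Lset Λ [i] k) => Sw S ν.1 * adjoint (Sw S ν.1))
        (1 - adjoint (S i) * S i))
    (ν : List (Fin n)) (hν : ν ∉ Λ) :
    Sw S ν = 0 :=
  stmt_5_general hpi hΛe (fun i μ hμ ↦ le_hasSum (hM3 i) ⟨μ, hμ.mem_iUnion_Lset (hΛg i)⟩
    fun w _ ↦ mul_star_self_nonneg (Sw S w.1)) hν
end

section
/- Let α, β be positive words with β ∈ Λ*, let E := S_α S_β* S_β S_α*, and let j ∈ {1,…,n}. Then E commutes with S_j S_j*, i.e. E S_j S_j* = S_j S_j* E. -/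
open ContinuousLinearMap

/-!
For a word beginning with `i`, the product `E` has the form `S i * x * star (S i)`. The projection
`p = S j * star (S j)` fixes `E` on both sides when `i = j`. When `i ≠ j` it annihilates `E` on
both sides: compressing `S i * star (S i) + p ≤ 1` by `S j` gives `star (S j) * S i = 0`. The empty
word is an instance of (M2).
-/

theorem commute_conj_mul_star_self {R : Type*} [Semigroup R] [StarMul R] {s : R}
    (hs : s * star s * s = s) (x : R) : Commute (s * x * star s) (s * star s) := by
  have hs' : star s * s * star s = star s := by
    simpa only [star_mul, star_star, mul_assoc] using congrArg star hs
  calc s * x * star s * (s * star s) = s * x * (star s * s * star s) := by simp only [mul_assoc]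
    _ = s * star s * s * x * star s := by rw [hs', hs]
    _ = s * star s * (s * x * star s) := by simp only [mul_assoc]

theorem commute_conj_mul_star_self_of_star_mul_eq_zero {R : Type*} [NonUnitalSemiring R]
    [StarRing R] {s t : R} (hts : star t * s = 0) (x : R) :
    Commute (s * x * star s) (t * star t) := by
  have hst : star s * t = 0 := by
    simpa only [star_mul, star_star, star_zero] using congrArg star hts
  calc s * x * star s * (t * star t) = s * x * (star s * t) * star t := by simp only [mul_assoc]
    _ = t * (star t * s) * x * star s := by simp only [hst, hts, mul_zero, zero_mul]
    _ = t * star t * (s * x * star s) := by simp only [mul_assoc]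

theorem star_mul_eq_zero_of_mul_star_self_add_le_one {R : Type*} [NormedRing R] [StarRing R]
    [CStarRing R] [PartialOrder R] [StarOrderedRing R] {s t : R} (ht : t * star t * t = t)
    (hst : s * star s + t * star t ≤ 1) : star t * s = 0 := by
  have hle : star t * s * star (star t * s) + star t * t ≤ star t * t :=
    calc star t * s * star (star t * s) + star t * t
        = star t * s * star (star t * s) + star t * (t * star t * t) := by rw [ht]
      _ = star t * (s * star s + t * star t) * t := by
          simp only [star_mul, star_star, mul_add, add_mul, mul_assoc]
      _ ≤ star t * 1 * t := star_left_conjugate_le_conjugate hst t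
      _ = star t * t := by rw [mul_one]
  rw [← CStarRing.mul_star_self_eq_zero_iff]
  exact le_antisymm (add_le_iff_nonpos_left.mp hle) (mul_star_self_nonneg _)

theorem stmt_6_general {A ι : Type*} [NormedRing A] [StarRing A] [CStarRing A] [PartialOrder A]
    [StarOrderedRing A] (S : ι → A) {j : ι} (hj : S j * star (S j) * S j = S j)
    (hle : ∀ i ≠ j, S i * star (S i) + S j * star (S j) ≤ 1)
    {x : A} (hx : Commute x (S j * star (S j))) (α : List ι) :
    Commute ((α.map S).prod * x * star (α.map S).prod) (S j * star (S j)) := by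
  cases α with
  | nil => simpa using hx
  | cons i α =>
    have hcons : ((i :: α).map S).prod * x * star ((i :: α).map S).prod =
        S i * ((α.map S).prod * x * star (α.map S).prod) * star (S i) := by
      simp only [List.map_cons, List.prod_cons, star_mul, mul_assoc]
    rw [hcons]
    obtain rfl | hij := eq_or_ne i j
    · exact commute_conj_mul_star_self hj _
    · exact commute_conj_mul_star_self_of_star_mul_eq_zero
        (star_mul_eq_zero_of_mul_star_self_add_le_one hj (hle i hij)) _

theorem stmt_6 {H : Type*} [NormedAddCommGroup H] [InnerProductSpace ℂ H]
    [CompleteSpace H]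
    (n : ℕ) (hn : 1 ≤ n) (S : Fin n → H →L[ℂ] H)
    (hpi : ∀ i, S i * adjoint (S i) * S i = S i)
    (Λ : Set (List (Fin n)))
    (hΛe : ([] : List (Fin n)) ∈ Λ)
    (hΛg : ∀ i : Fin n, [i] ∈ Λ)
    (hΛsub : ∀ ν ∈ Λ, ∀ w : List (Fin n), w <:+: ν → w ∈ Λ)
    (hM1 : ∑ i, S i * adjoint (S i) = 1)
    (hM2 : ∀ μ ∈ Λ, ∀ ν ∈ Λ,
      Commute (Sw S μ * adjoint (Sw S μ)) (adjoint (Sw S ν) * Sw S ν))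
    (hM3 : ∀ i : Fin n,
      HasSum (fun ν : ↥(⋃ k ≥ 1, Lset Λ [i] k) => Sw S ν.1 * adjoint (Sw S ν.1))
        (1 - adjoint (S i) * S i))
    (α β : List (Fin n)) (hβ : β ∈ Λ) (j : Fin n) :
    (Sw S α * adjoint (Sw S β) * Sw S β * adjoint (Sw S α)) * (S j * adjoint (S j)) =
      (S j * adjoint (S j)) * (Sw S α * adjoint (Sw S β) * Sw S β * adjoint (Sw S α)) := by
  have hle (i : Fin n) (hij : i ≠ j) : S i * star (S i) + S j * star (S j) ≤ 1 :=
    (Finset.add_le_sum (fun k _ ↦ mul_star_self_nonneg (S k)) (Finset.mem_univ i)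
      (Finset.mem_univ j) hij).trans_eq hM1
  have hcomm : Commute (star (Sw S β) * Sw S β) (S j * star (S j)) := by
    simpa [Sw, star_eq_adjoint] using (hM2 [j] (hΛg j) β hβ).symm
  simpa only [Sw, star_eq_adjoint, mul_assoc] using (stmt_6_general S (hpi j) hle hcomm α).eq
end

section
/- If r ∈ F_n has reduced form r = r_1⋯r_k in which, for some index i, r_i is the inverse of a generator and r_{i+1} is a generator (i.e. r_i = g_a^{-1} and r_{i+1} = g_b with necessarily a ≠ b), then S(r) = 0. -/
open ContinuousLinearMap

/-- For `t` in the free group `F_n` with reduced form `t = t₁⋯t_k`,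
`Smap S t = S(t₁)⋯S(t_k)`, where `S(g_j) = S j` and `S(g_j⁻¹) = (S j)*`;
`Smap S 1 = 1`.  (In `FreeGroup (Fin n)`, the letter `(j, true)` is the
generator `g_j` and `(j, false)` is its inverse `g_j⁻¹`, and `.toWord`
is the reduced word of an element.) -/
noncomputable def Smap {H : Type*} [NormedAddCommGroup H] [InnerProductSpace ℂ H]
    [CompleteSpace H] {n : ℕ} (S : Fin n → H →L[ℂ] H) (t : FreeGroup (Fin n)) :
    H →L[ℂ] H :=
  (t.toWord.map (fun p => if p.2 then S p.1 else adjoint (S p.1))).prod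

/-!
Conjugating `x x⋆ + y y⋆ ≤ 1` by a partial isometry `y` gives `(x⋆ y)⋆ (x⋆ y) + y⋆ y ≤ y⋆ y`, hence
`x⋆ y = 0`. So distinct members of a family of partial isometries whose range projections sum to
at most `1` satisfy `(S a)⋆ S b = 0`. In a reduced word a letter `g_a⁻¹` followed by `g_b` has
`a ≠ b`, so the corresponding product contains the zero factor `(S a)⋆ S b`.
-/

section Letters

variable {α : Type*}

theorem pair_infix_iff_getElem? {x y : α} {l : List α} :
    [x, y] <:+: l ↔ ∃ i : ℕ, l[i]? = some x ∧ l[i + 1]? = some y := by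
  constructor
  · rintro ⟨u, v, rfl⟩
    exact ⟨u.length, by simp, by simp⟩
  · rintro ⟨i, hx, hy⟩
    obtain ⟨hi, rfl⟩ := List.getElem?_eq_some_iff.1 hx
    obtain ⟨hi', rfl⟩ := List.getElem?_eq_some_iff.1 hy
    refine ⟨l.take i, l.drop (i + 2), ?_⟩
    simp

theorem ne_of_inv_gen_infix_of_isReduced {w : List (α × Bool)} {a b : α}
    (hw : FreeGroup.IsReduced w) (hab : [(a, false), (b, true)] <:+: w) : a ≠ b := by
  have hpair := hw.infix hab
  simpa using hpair

end Letters

section StarWord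

variable {ι A : Type*} [Star A]

/-- The value `S(r₁)⋯S(r_k)` of a word `r₁⋯r_k` in the letters `g_i` (encoded as `(i, true)`) and
`g_i⁻¹` (encoded as `(i, false)`), where `S(g_i) = S i` and `S(g_i⁻¹) = (S i)⋆`. -/
def starWordProd [Monoid A] (S : ι → A) (w : List (ι × Bool)) : A :=
  (w.map fun p => if p.2 then S p.1 else star (S p.1)).prod

theorem starWordProd_append [Monoid A] (S : ι → A) (u v : List (ι × Bool)) :
    starWordProd S (u ++ v) = starWordProd S u * starWordProd S v := by
  simp [starWordProd]

theorem starWordProd_inv_gen [Monoid A] (S : ι → A) (a b : ι) :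
    starWordProd S [(a, false), (b, true)] = star (S a) * S b := by
  simp [starWordProd]

theorem starWordProd_eq_zero_of_infix [MonoidWithZero A] {S : ι → A} {u w : List (ι × Bool)}
    (huw : u <:+: w) (hu : starWordProd S u = 0) : starWordProd S w = 0 := by
  obtain ⟨s, t, rfl⟩ := huw
  simp only [starWordProd_append, hu, mul_zero, zero_mul]

end StarWord

section CStar

variable {ι A : Type*} [NormedRing A] [StarRing A] [CStarRing A] [PartialOrder A]
  [StarOrderedRing A]

theorem star_mul_eq_zero_of_mul_star_add_mul_star_le_one {x y : A} (hy : y * star y * y = y)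
    (hxy : x * star x + y * star y ≤ 1) : star x * y = 0 := by
  have hconj : star (star x * y) * (star x * y) + star y * y ≤ star y * y :=
    calc star (star x * y) * (star x * y) + star y * y
        = star (star x * y) * (star x * y) + star y * (y * star y * y) := by rw [hy]
      _ = star y * (x * star x + y * star y) * y := by
          simp only [star_mul, star_star]; noncomm_ring
      _ ≤ star y * 1 * y := star_left_conjugate_le_conjugate hxy y
      _ = star y * y := by rw [mul_one]
  have hnonpos : star (star x * y) * (star x * y) ≤ 0 := add_le_iff_nonpos_left.1 hconj
  exact (CStarRing.star_mul_self_eq_zero_iff _).1 (hnonpos.antisymm (star_mul_self_nonneg _))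

theorem stmt_11_general {S : ι → A} (hpi : ∀ i, S i * star (S i) * S i = S i)
    (hsum : ∀ s : Finset ι, ∑ i ∈ s, S i * star (S i) ≤ 1) {w : List (ι × Bool)}
    (hw : FreeGroup.IsReduced w) (h : ∃ a b, [(a, false), (b, true)] <:+: w) :
    starWordProd S w = 0 := by
  classical
  obtain ⟨a, b, hab⟩ := h
  have hne : a ≠ b := ne_of_inv_gen_infix_of_isReduced hw hab
  have hpair : S a * star (S a) + S b * star (S b) ≤ 1 := by
    simpa only [Finset.sum_pair hne] using hsum {a, b}
  refine starWordProd_eq_zero_of_infix hab ?_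
  rw [starWordProd_inv_gen, star_mul_eq_zero_of_mul_star_add_mul_star_le_one (hpi b) hpair]

end CStar

theorem Smap_eq_starWordProd {H : Type*} [NormedAddCommGroup H] [InnerProductSpace ℂ H]
    [CompleteSpace H] {n : ℕ} (S : Fin n → H →L[ℂ] H) (t : FreeGroup (Fin n)) :
    Smap S t = starWordProd S t.toWord :=
  rfl

theorem stmt_11 {H : Type*} [NormedAddCommGroup H] [InnerProductSpace ℂ H]
    [CompleteSpace H]
    (n : ℕ) (hn : 1 ≤ n) (S : Fin n → H →L[ℂ] H)
    (hpi : ∀ i, S i * adjoint (S i) * S i = S i)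
    (hM1 : ∑ i, S i * adjoint (S i) = 1)
    (r : FreeGroup (Fin n))
    -- in the reduced form of `r`, some letter is the inverse of a generator
    -- and the next letter is a generator
    (h : ∃ (i : ℕ) (a b : Fin n),
      r.toWord[i]? = some (a, false) ∧ r.toWord[i + 1]? = some (b, true)) :
    Smap S r = 0 := by
  obtain ⟨i, a, b, ha, hb⟩ := h
  rw [Smap_eq_starWordProd]
  exact stmt_11_general hpi
    (fun s => (s.sum_le_univ_sum_of_nonneg fun i => mul_star_self_nonneg (S i)).trans_eq hM1)
    FreeGroup.isReduced_toWord ⟨a, b, pair_infix_iff_getElem?.2 ⟨i, ha, hb⟩⟩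
end
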